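/- For odd N and real numbers c₁,c₂,c₃, the characteristic polynomial of the N-qubit state ρ_N = 2^{-N}(1 + ∑_{j=1}^{3} c_j σ_j^{⊗N}) equals ((X − (1+ξ)/2^N)(X − (1−ξ)/2^N))^{2^{N−1}}, where ξ = √(c₁²+c₂²+c₃²). Equivalently, ρ_N has exactly the two eigenvalues (1+ξ)/2^N and (1−ξ)/2^N, each with multiplicity 2^{N−1}. -/

import Mathlib

/-!
Put `A = ∑ⱼ cⱼ σⱼ^{⊗N}`. Kronecker powers are multiplicative and `σⱼ σₖ = -σₖ σⱼ` for `j ≠ k`, so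
for odd `N` the matrices `σⱼ^{⊗N}` are again anticommuting involutions, whence `A² = ξ²`
(`pauliSum_sq`). Only `σ₂` is antisymmetric, so for odd `N` transposition flips the sign of
`σ₂^{⊗N}` alone, while conjugation by `σ₂^{⊗N}` flips the signs of the other two; together,
`σ₂^{⊗N} Aᵀ σ₂^{⊗N} = -A` (`pauliPow_one_conj_transpose`). Hence `det (y - aA) = det (y + aA)`, and
`det (y - aA)² = det (y² - a²A²) = (y² - a²ξ²)^{2^N}`. With `a = 2^{-N}` and `y = X - a` the left
side is the square of the characteristic polynomial of `ρ_N`; both `det (y - aA)` and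
`(y² - a²ξ²)^{2^{N-1}}` are monic, which fixes the sign of the square root.
-/

open Matrix Complex Polynomial

noncomputable section

/-- The Pauli matrices σ₁, σ₂, σ₃ (indexed by `Fin 3`). -/
def σ : Fin 3 → Matrix (Fin 2) (Fin 2) ℂ
  | 0 => !![0, 1; 1, 0]
  | 1 => !![0, -Complex.I; Complex.I, 0]
  | 2 => !![1, 0; 0, -1]

/-- The N-fold Kronecker power σⱼ^{⊗N}, with entries (σⱼ^{⊗N})_{x,y} = ∏ₜ (σⱼ)_{x t, y t}. -/
def pauliPow (N : ℕ) (j : Fin 3) : Matrix (Fin N → Fin 2) (Fin N → Fin 2) ℂ :=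
  Matrix.of fun x y => ∏ t, σ j (x t) (y t)

/-- The N-qubit state ρ_N = 2^{-N}(1 + ∑ⱼ cⱼ σⱼ^{⊗N}). -/
def rhoN (N : ℕ) (c₁ c₂ c₃ : ℝ) : Matrix (Fin N → Fin 2) (Fin N → Fin 2) ℂ :=
  ((2 : ℂ) ^ N)⁻¹ •
    (1 + (c₁ : ℂ) • pauliPow N 0 + (c₂ : ℂ) • pauliPow N 1 + (c₃ : ℂ) • pauliPow N 2)

/-- The `N`-fold Kronecker power of a one-qubit matrix. -/
def kronPow (N : ℕ) (M : Matrix (Fin 2) (Fin 2) ℂ) : Matrix (Fin N → Fin 2) (Fin N → Fin 2) ℂ :=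
  Matrix.of fun x y => ∏ t, M (x t) (y t)

theorem pauliPow_eq_kronPow (N : ℕ) (j : Fin 3) : pauliPow N j = kronPow N (σ j) := rfl

theorem kronPow_mul (N : ℕ) (M L : Matrix (Fin 2) (Fin 2) ℂ) :
    kronPow N M * kronPow N L = kronPow N (M * L) := by
  ext x y
  simp only [kronPow, Matrix.mul_apply, Matrix.of_apply, Finset.prod_univ_sum,
    Fintype.piFinset_univ, Finset.prod_mul_distrib]

theorem kronPow_one (N : ℕ) : kronPow N 1 = 1 := by
  ext x y
  by_cases h : x = y
  · subst h
    simp [kronPow]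
  · obtain ⟨t, ht⟩ := Function.ne_iff.mp h
    rw [Matrix.one_apply_ne h]
    exact Finset.prod_eq_zero (Finset.mem_univ t) (Matrix.one_apply_ne ht)

theorem kronPow_neg {N : ℕ} (hN : Odd N) (M : Matrix (Fin 2) (Fin 2) ℂ) :
    kronPow N (-M) = -kronPow N M := by
  ext x y
  simp [kronPow, Finset.prod_neg, hN.neg_one_pow]

theorem kronPow_transpose (N : ℕ) (M : Matrix (Fin 2) (Fin 2) ℂ) :
    (kronPow N M)ᵀ = kronPow N Mᵀ := rfl

theorem sigma_mul_self (j : Fin 3) : σ j * σ j = 1 := by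
  fin_cases j <;> ext a b <;> fin_cases a <;> fin_cases b <;> simp [σ, Matrix.mul_apply]

theorem sigma_anticomm {j k : Fin 3} (h : j ≠ k) : σ j * σ k = -(σ k * σ j) := by
  fin_cases j <;> fin_cases k <;> first
    | exact absurd rfl h
    | (ext a b; fin_cases a <;> fin_cases b <;> simp [σ, Matrix.mul_apply])

theorem pauliPow_mul_self (N : ℕ) (j : Fin 3) : pauliPow N j * pauliPow N j = 1 := by
  rw [pauliPow_eq_kronPow, kronPow_mul, sigma_mul_self, kronPow_one]

theorem pauliPow_anticomm {N : ℕ} (hN : Odd N) {j k : Fin 3} (h : j ≠ k) :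
    pauliPow N j * pauliPow N k = -(pauliPow N k * pauliPow N j) := by
  simp only [pauliPow_eq_kronPow, kronPow_mul]
  rw [sigma_anticomm h, kronPow_neg hN]

theorem pauliPow_zero_transpose (N : ℕ) : (pauliPow N 0)ᵀ = pauliPow N 0 := by
  rw [pauliPow_eq_kronPow, kronPow_transpose]
  congr 1
  ext a b
  fin_cases a <;> fin_cases b <;> simp [σ]

theorem pauliPow_one_transpose {N : ℕ} (hN : Odd N) : (pauliPow N 1)ᵀ = -pauliPow N 1 := by
  rw [pauliPow_eq_kronPow, kronPow_transpose, ← kronPow_neg hN]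
  congr 1
  ext a b
  fin_cases a <;> fin_cases b <;> simp [σ]

theorem pauliPow_two_transpose (N : ℕ) : (pauliPow N 2)ᵀ = pauliPow N 2 := by
  rw [pauliPow_eq_kronPow, kronPow_transpose]
  congr 1
  ext a b
  fin_cases a <;> fin_cases b <;> simp [σ]

/-- The traceless part `∑ⱼ cⱼ σⱼ^{⊗N}` of `2^N ρ_N`, with complex coefficients. -/
def pauliSum (N : ℕ) (c₁ c₂ c₃ : ℂ) : Matrix (Fin N → Fin 2) (Fin N → Fin 2) ℂ :=
  c₁ • pauliPow N 0 + c₂ • pauliPow N 1 + c₃ • pauliPow N 2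

theorem pauliSum_sq {N : ℕ} (hN : Odd N) (c₁ c₂ c₃ : ℂ) :
    pauliSum N c₁ c₂ c₃ * pauliSum N c₁ c₂ c₃ =
      (c₁ ^ 2 + c₂ ^ 2 + c₃ ^ 2) • (1 : Matrix (Fin N → Fin 2) (Fin N → Fin 2) ℂ) := by
  simp only [pauliSum, add_mul, mul_add, smul_mul_assoc, mul_smul_comm, pauliPow_mul_self,
    pauliPow_anticomm hN (show (1 : Fin 3) ≠ 0 by decide),
    pauliPow_anticomm hN (show (2 : Fin 3) ≠ 0 by decide),
    pauliPow_anticomm hN (show (2 : Fin 3) ≠ 1 by decide)]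
  module

/-- Transposition changes the sign of the `σ₂` term only, and conjugation by `σ₂^{⊗N}` changes the
signs of the `σ₁` and `σ₃` terms only. -/
theorem pauliPow_one_conj_transpose {N : ℕ} (hN : Odd N) (c₁ c₂ c₃ : ℂ) :
    pauliPow N 1 * (pauliSum N c₁ c₂ c₃)ᵀ * pauliPow N 1 = -pauliSum N c₁ c₂ c₃ := by
  have h (j : Fin 3) (hj : 1 ≠ j) :
      pauliPow N 1 * pauliPow N j * pauliPow N 1 = -pauliPow N j := by
    rw [pauliPow_anticomm hN hj, neg_mul, mul_assoc, pauliPow_mul_self, mul_one]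
  simp only [pauliSum, Matrix.transpose_add, Matrix.transpose_smul, pauliPow_zero_transpose,
    pauliPow_one_transpose hN, pauliPow_two_transpose, add_mul, mul_add, smul_mul_assoc,
    mul_smul_comm, mul_neg, neg_mul, pauliPow_mul_self, one_mul, h 0 (by decide), h 2 (by decide)]
  module

/-- If `A` squares to the scalar `s` and `Aᵀ` is conjugate to `-A` by an involution `P`, then
`det (y - aA)² = (y² - a²s)^n`. The statement lives over `ℂ[X]`, where `y` can involve the
indeterminate. -/
theorem det_sq_of_conj_transpose {n : Type*} [Fintype n] [DecidableEq n] {A P : Matrix n n ℂ}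
    {s : ℂ} (hA : A * A = s • (1 : Matrix n n ℂ)) (hP : P * P = 1) (hPA : P * Aᵀ * P = -A)
    (a : ℂ) (y : ℂ[X]) :
    (y • (1 : Matrix n n ℂ[X]) - C a • A.map C).det ^ 2 =
      (y ^ 2 - C (a ^ 2 * s)) ^ Fintype.card n := by
  have hA' : A.map C * A.map C = C s • (1 : Matrix n n ℂ[X]) := by
    rw [← Matrix.map_mul, hA]
    ext i j
    by_cases h : i = j <;> simp [h]
  have hP' : P.map C * P.map C = (1 : Matrix n n ℂ[X]) := by
    rw [← Matrix.map_mul, hP, Matrix.map_one _ C_0 C_1]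
  have hPA' : P.map C * (A.map C)ᵀ * P.map C = -(A.map (C : ℂ →+* ℂ[X])) := by
    rw [← Matrix.transpose_map, ← Matrix.map_mul, ← Matrix.map_mul, hPA]
    ext i j
    simp
  have hneg : (y • (1 : Matrix n n ℂ[X]) - C a • A.map C).det =
      (y • (1 : Matrix n n ℂ[X]) + C a • A.map C).det := by
    have hd : (P.map (C : ℂ →+* ℂ[X])).det * (P.map C).det = 1 := by
      rw [← Matrix.det_mul, hP', Matrix.det_one]
    have hc : P.map C * (y • (1 : Matrix n n ℂ[X]) - C a • A.map C)ᵀ * P.map C =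
        y • (1 : Matrix n n ℂ[X]) + C a • A.map C := by
      rw [Matrix.transpose_sub, Matrix.transpose_smul, Matrix.transpose_smul, Matrix.transpose_one,
        mul_sub, sub_mul, mul_smul_comm, mul_smul_comm, smul_mul_assoc, smul_mul_assoc, mul_one,
        hP', hPA', smul_neg, sub_neg_eq_add]
    rw [← hc, Matrix.det_mul, Matrix.det_mul, Matrix.det_transpose, mul_right_comm, hd, one_mul]
  have hprod : (y • (1 : Matrix n n ℂ[X]) - C a • A.map C) *
      (y • (1 : Matrix n n ℂ[X]) + C a • A.map C) =
      (y ^ 2 - C (a ^ 2 * s)) • (1 : Matrix n n ℂ[X]) := by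
    simp only [sub_mul, mul_add, smul_mul_assoc, mul_smul_comm, one_mul, mul_one, hA', C_mul, C_pow]
    module
  calc _ = (y • (1 : Matrix n n ℂ[X]) - C a • A.map C).det *
        (y • (1 : Matrix n n ℂ[X]) + C a • A.map C).det := by rw [sq, ← hneg]
    _ = _ := by rw [← Matrix.det_mul, hprod, Matrix.det_smul, Matrix.det_one, mul_one]

theorem charpoly_smul_one_add {n : Type*} [Fintype n] [DecidableEq n] (A : Matrix n n ℂ) (a : ℂ) :
    (a • (1 + A)).charpoly = ((X - C a) • (1 : Matrix n n ℂ[X]) - C a • A.map C).det := by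
  rw [Matrix.charpoly]
  congr 1
  ext1 i j
  by_cases h : i = j
  · subst h
    simp
    ring
  · simp [h]

theorem eq_of_monic_of_sq_eq {p q : ℂ[X]} (hp : p.Monic) (hq : q.Monic) (h : p ^ 2 = q ^ 2) :
    p = q := by
  rcases sq_eq_sq_iff_eq_or_eq_neg.mp h with h | h
  · exact h
  · have := congrArg Polynomial.leadingCoeff h
    rw [Polynomial.leadingCoeff_neg, hp.leadingCoeff, hq.leadingCoeff] at this
    norm_num at this

theorem charpoly_rhoN_odd (N : ℕ) (hN : Odd N) (c₁ c₂ c₃ : ℝ) :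
    (rhoN N c₁ c₂ c₃).charpoly =
      ((X - C (((1 + Real.sqrt (c₁ ^ 2 + c₂ ^ 2 + c₃ ^ 2)) / 2 ^ N : ℝ) : ℂ)) *
        (X - C (((1 - Real.sqrt (c₁ ^ 2 + c₂ ^ 2 + c₃ ^ 2)) / 2 ^ N : ℝ) : ℂ))) ^ 2 ^ (N - 1) := by
  refine eq_of_monic_of_sq_eq (Matrix.charpoly_monic _)
    (((monic_X_sub_C _).mul (monic_X_sub_C _)).pow _) ?_
  have hrho : rhoN N c₁ c₂ c₃ = ((2 : ℂ) ^ N)⁻¹ • (1 + pauliSum N c₁ c₂ c₃) := by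
    simp only [rhoN, pauliSum, add_assoc]
  have hcard : Fintype.card (Fin N → Fin 2) = 2 ^ (N - 1) * 2 := by
    rw [← pow_succ, Nat.sub_add_cancel hN.pos]
    simp
  rw [hrho, charpoly_smul_one_add, det_sq_of_conj_transpose (pauliSum_sq hN _ _ _)
    (pauliPow_mul_self N 1) (pauliPow_one_conj_transpose hN _ _ _), hcard, pow_mul]
  congr 2
  have hξ : ((Real.sqrt (c₁ ^ 2 + c₂ ^ 2 + c₃ ^ 2) : ℝ) : ℂ) ^ 2 =
      (c₁ : ℂ) ^ 2 + (c₂ : ℂ) ^ 2 + (c₃ : ℂ) ^ 2 := by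
    rw [← Complex.ofReal_pow, Real.sq_sqrt (by positivity)]
    push_cast
    rfl
  rw [← hξ]
  push_cast
  simp only [div_eq_mul_inv, C_mul, C_add, C_sub, C_1, C_pow]
  ring
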